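/- arXiv:1503.03279 — 3 statements merged into one kernel-verified Lean document; each statement's English description precedes it below -/
import Mathlib

section
/- For every integer k, the identity 2k·a_0·\overline{t^{k-1}u\,dt} = −∑_{j=1}^{n} (3j + 2k)·a_j·\overline{t^{k+j-1}u\,dt} holds in Ω¹_R/dR. -/
open Polynomial LaurentPolynomial

noncomputable section

variable (n : ℕ) (a : ℕ → ℂ)

/-- The polynomial `p(t) = aₙtⁿ + ... + a₁t + a₀`. -/
def pPoly : Polynomial ℂ := ∑ i ∈ Finset.range (n + 1), Polynomial.C (a i) * Polynomial.X ^ i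

/-- The hyperelliptic ring `R = ℂ[t,t⁻¹][u]/(u² - p(t))`. -/
abbrev HyperRing : Type :=
  AdjoinRoot ((Polynomial.X : Polynomial (LaurentPolynomial ℂ)) ^ 2 -
    Polynomial.C ((pPoly n a).toLaurent))

/-- The element `tⁱ` of `R`, for `i : ℤ`. -/
abbrev tpow (i : ℤ) : HyperRing n a :=
  algebraMap (LaurentPolynomial ℂ) (HyperRing n a) (LaurentPolynomial.T i)

/-- The element `u` of `R`. -/
abbrev uElt : HyperRing n a := AdjoinRoot.root _

/-- The subspace `dR` of exact differentials inside the Kähler differentials `Ω¹_R`. -/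
abbrev dR : Submodule ℂ (Ω[HyperRing n a⁄ℂ]) :=
  LinearMap.range (KaehlerDifferential.D ℂ (HyperRing n a)).toLinearMap

/-- The quotient `Ω¹_R/dR`. -/
abbrev OmegaQ := Ω[HyperRing n a⁄ℂ] ⧸ dR n a

/-- The class of a Kähler differential in `Ω¹_R/dR`. -/
abbrev cl (ω : Ω[HyperRing n a⁄ℂ]) : OmegaQ n a := Submodule.Quotient.mk ω

/-- The class `\overline{f dg}` in `Ω¹_R/dR`. -/
abbrev fdg (f g : HyperRing n a) : OmegaQ n a :=
  cl n a (f • KaehlerDifferential.D ℂ (HyperRing n a) g)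

/-- `ω₀ = class of t⁻¹ dt`. -/
abbrev ω0 : OmegaQ n a := fdg n a (tpow n a (-1)) (tpow n a 1)

/-- `ω_k = class of t⁻ᵏ u dt`. -/
abbrev ωk (k : ℕ) : OmegaQ n a := fdg n a (tpow n a (-(k : ℤ)) * uElt n a) (tpow n a 1)

theorem aux_DT {A : Type*} [CommRing A] [Algebra ℂ A] (T : ℤ → A) (h0 : T 0 = 1)
    (hT : ∀ i j, T (i + j) = T i * T j) (k : ℤ) :
    KaehlerDifferential.D ℂ A (T k) = ((k : ℤ) : ℂ) • T (k - 1) • KaehlerDifferential.D ℂ A (T 1) := by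
  have hinv : ∀ i, T (-i) * T i = 1 := fun i => by rw [← hT, neg_add_cancel, h0]
  let f : ℤ →+ Ω[A⁄ℂ] :=
    { toFun := fun i => T (-i) • KaehlerDifferential.D ℂ A (T i)
      map_zero' := by simp [h0]
      map_add' := fun i j => by
        rw [hT, Derivation.leibniz, neg_add, hT, smul_add, smul_smul, smul_smul, add_comm]
        congr 2
        · linear_combination (T (-i)) * hinv j
        · linear_combination (T (-j)) * hinv i }
  have h1 : f k = k • f 1 := by rw [← map_zsmul]; simp
  have h2 : T k • f k = KaehlerDifferential.D ℂ A (T k) := by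
    change T k • T (-k) • KaehlerDifferential.D ℂ A (T k) = _
    rw [smul_smul, mul_comm, hinv, one_smul]
  rw [← h2, h1]
  change T k • k • T (-1) • KaehlerDifferential.D ℂ A (T 1) = _
  rw [smul_comm, smul_smul, ← hT, Int.cast_smul_eq_zsmul, sub_eq_add_neg]

theorem aux_main {A : Type*} [CommRing A] [Algebra ℂ A] (T : ℤ → A) (h0 : T 0 = 1)
    (hT : ∀ i j, T (i + j) = T i * T j) (u : A) (n : ℕ) (a : ℕ → ℂ)
    (hu : u ^ 2 = ∑ i ∈ Finset.range (n + 1), a i • T i) (k : ℤ) :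
    KaehlerDifferential.D ℂ A ((2 : ℂ) • (T k * u ^ 3)) =
      ∑ j ∈ Finset.range (n + 1), (((3 * (j : ℤ) + 2 * k : ℤ) : ℂ) * a j) •
        ((T (k + (j : ℤ) - 1) * u) • KaehlerDifferential.D ℂ A (T 1)) := by
  have hd := congrArg (KaehlerDifferential.D ℂ A) hu
  rw [pow_two, Derivation.leibniz, map_sum] at hd
  simp only [Derivation.map_smul] at hd
  have e1 : (2 : ℂ) • (T k * u ^ 3) = (2 : ℂ) • ((T k * u) * u ^ 2) := by congr 1; ring
  have e3 : KaehlerDifferential.D ℂ A ((2 : ℂ) • (T k * u ^ 3)) =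
      (2 * u * u ^ 2) • KaehlerDifferential.D ℂ A (T k) +
      (3 * (T k * u)) • (u • KaehlerDifferential.D ℂ A u + u • KaehlerDifferential.D ℂ A u) := by
    rw [Derivation.map_smul, Derivation.leibniz, Derivation.leibniz_pow,
      ofNat_smul_eq_nsmul ℂ 2]
    module
  rw [e3, hd, hu, Finset.mul_sum, Finset.sum_smul, Finset.smul_sum, ← Finset.sum_add_distrib]
  refine Finset.sum_congr rfl fun j _ => ?_
  rw [aux_DT T h0 hT k, aux_DT T h0 hT j]
  have e4 : T (k + j - 1) = T j * T (k - 1) := by rw [← hT]; congr 1; ring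
  have e5 : T (k + j - 1) = T k * T (j - 1) := by rw [← hT]; congr 1; ring
  generalize KaehlerDifferential.D ℂ A (T 1) = w
  have cs : ∀ (c : ℂ) (x : Ω[A⁄ℂ]), c • x = algebraMap ℂ A c • x :=
    fun c x => (algebraMap_smul A c x).symm
  have s1 : (2 * u * a j • T j) • ((k : ℤ) : ℂ) • T (k - 1) • w =
      (2 * (k : ℂ) * a j) • ((T (k + j - 1) * u) • w) := by
    rw [e4]
    simp only [cs, smul_smul, Algebra.smul_def, map_mul, map_ofNat]
    congr 1; ring
  have s2 : (3 * (T k * u)) • a j • (((j : ℤ) : ℤ) : ℂ) • T (j - 1) • w =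
      (3 * (j : ℂ) * a j) • ((T (k + j - 1) * u) • w) := by
    rw [e5]
    simp only [cs, smul_smul, Algebra.smul_def, map_mul, map_ofNat,
      Int.cast_natCast]
    congr 1; ring
  rw [s1, s2, ← add_smul]
  congr 1; push_cast; ring

/-- For every integer `k`,
`2k·a₀·\overline{t^{k-1}u dt} = −∑_{j=1}^{n} (3j+2k)·a_j·\overline{t^{k+j-1}u dt}`
holds in `Ω¹_R/dR`. -/
theorem statement2 (hn : 1 ≤ n) (han : a n = 1) (ha0 : a 0 ≠ 0)
    (hsep : (pPoly n a).Separable) (k : ℤ) :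
    (((2 * k : ℤ) : ℂ) * a 0) •
        fdg n a (tpow n a (k - 1) * uElt n a) (tpow n a 1) =
      -∑ j ∈ Finset.Icc 1 n,
        (((3 * (j : ℤ) + 2 * k : ℤ) : ℂ) * a j) •
          fdg n a (tpow n a (k + (j : ℤ) - 1) * uElt n a) (tpow n a 1) := by
  have hu : (uElt n a) ^ 2 = ∑ i ∈ Finset.range (n + 1), a i • tpow n a i := by
    have h := AdjoinRoot.eval₂_root ((Polynomial.X : Polynomial (LaurentPolynomial ℂ)) ^ 2 -
      Polynomial.C ((pPoly n a).toLaurent))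
    rw [Polynomial.eval₂_sub, Polynomial.eval₂_pow, Polynomial.eval₂_X, Polynomial.eval₂_C,
      sub_eq_zero] at h
    have hp : (pPoly n a).toLaurent = ∑ i ∈ Finset.range (n + 1),
        a i • (LaurentPolynomial.T (i : ℤ) : LaurentPolynomial ℂ) := by
      rw [pPoly, map_sum]
      refine Finset.sum_congr rfl fun i _ => ?_
      rw [Polynomial.toLaurent_C_mul_X_pow, ← LaurentPolynomial.smul_eq_C_mul]
    have hm : ∀ x : LaurentPolynomial ℂ, x = ∑ i ∈ Finset.range (n + 1),
        a i • (LaurentPolynomial.T (i : ℤ) : LaurentPolynomial ℂ) →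
        algebraMap (LaurentPolynomial ℂ) (HyperRing n a) x =
          ∑ i ∈ Finset.range (n + 1), a i • tpow n a i := by
      rintro x rfl
      rw [map_sum]
      exact Finset.sum_congr rfl fun i _ => algebraMap.coe_smul _ _ _
    exact h.trans (hm _ hp)
  have h := aux_main (tpow n a) (by simp [tpow]) (fun i j => by
    simp only [tpow, LaurentPolynomial.T_add, map_mul]) (uElt n a) n a hu k
  have h2 := congrArg (cl n a) h
  have h3 : cl n a (KaehlerDifferential.D ℂ (HyperRing n a)
      ((2 : ℂ) • (tpow n a k * uElt n a ^ 3))) = 0 :=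
    (Submodule.Quotient.mk_eq_zero _).2 ⟨_, rfl⟩
  rw [h3] at h2
  have h4 : ∀ (s : Finset ℕ) (g : ℕ → Ω[HyperRing n a⁄ℂ]), cl n a (∑ j ∈ s, g j) =
      ∑ j ∈ s, cl n a (g j) := fun s g => map_sum (dR n a).mkQ g s
  rw [h4, Finset.range_eq_Ico, Finset.sum_eq_sum_Ico_succ_bot (Nat.succ_pos n)] at h2
  have h5 : Finset.Ico (0 + 1) (n + 1) = Finset.Icc 1 n := by ext; simp
  rw [h5] at h2
  simp only [Nat.cast_zero, mul_zero, zero_add, add_zero] at h2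
  exact eq_neg_of_add_eq_zero_left h2.symm
end
end

section
/- For every integer r ≥ 1, \overline{t^{-r} u\,dt} = ∑_{k=1}^{n} Q_{r,−k}·ω_k in Ω¹_R/dR. -/
open Polynomial LaurentPolynomial

noncomputable section

variable (n : ℕ) (a : ℕ → ℂ)

lemma tpow_mul (i j : ℤ) : tpow n a i * tpow n a j = tpow n a (i + j) := by
  simp only [tpow]
  rw [← map_mul, LaurentPolynomial.T_add]

lemma tpow_zero : tpow n a 0 = 1 := by
  simp [tpow]

lemma D_tpow (s : ℤ) : KaehlerDifferential.D ℂ (HyperRing n a) (tpow n a s) =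
    ((s : HyperRing n a) * tpow n a (s - 1)) • KaehlerDifferential.D ℂ (HyperRing n a) (tpow n a 1) := by
  have up : ∀ s : ℤ, KaehlerDifferential.D ℂ (HyperRing n a) (tpow n a (s + 1)) =
      tpow n a s • KaehlerDifferential.D ℂ (HyperRing n a) (tpow n a 1) +
      tpow n a 1 • KaehlerDifferential.D ℂ (HyperRing n a) (tpow n a s) := by
    intro s
    rw [← tpow_mul, Derivation.leibniz]
  induction s using Int.induction_on with
  | zero => rw [tpow_zero]; simp
  | succ k ih =>
    rw [up, ih, smul_smul, ← add_smul]
    congr 1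
    have : tpow n a (k : ℤ) = tpow n a 1 * tpow n a ((k : ℤ) - 1) := by
      rw [tpow_mul]; congr 1; congr 1; ring
    rw [add_sub_cancel_right, this]
    push_cast; ring
  | pred k ih =>
    have h := up (-(k : ℤ) - 1)
    rw [sub_add_cancel, ih] at h
    have h2 := congrArg (fun x => tpow n a (-1) • x) h
    simp only [smul_add, smul_smul] at h2
    rw [tpow_mul n a (-1) 1] at h2
    norm_num only at h2
    rw [tpow_zero, one_smul, ← sub_eq_iff_eq_add', ← sub_smul] at h2
    rw [← h2]
    congr 1
    have e : tpow n a (-(k : ℤ) - 1 - 1) = tpow n a (-1) * tpow n a (-(k : ℤ) - 1) := by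
      rw [tpow_mul]; congr 1; congr 1; ring
    rw [e]
    push_cast; ring

lemma u_sq : uElt n a * uElt n a = ∑ j ∈ Finset.range (n + 1), a j • tpow n a (j : ℤ) := by
  have h : Polynomial.aeval (uElt n a) ((Polynomial.X : Polynomial (LaurentPolynomial ℂ)) ^ 2 -
    Polynomial.C ((pPoly n a).toLaurent)) = 0 := by
    rw [AdjoinRoot.aeval_eq, AdjoinRoot.mk_self]
  simp only [map_sub, map_pow, Polynomial.aeval_X, Polynomial.aeval_C, sub_eq_zero] at h
  have hp : (pPoly n a).toLaurent = ∑ j ∈ Finset.range (n + 1), a j • LaurentPolynomial.T (j : ℤ) := by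
    unfold pPoly
    rw [map_sum]
    refine Finset.sum_congr rfl fun j _ => ?_
    rw [Polynomial.toLaurent_C_mul_X_pow, ← LaurentPolynomial.smul_eq_C_mul]
  rw [← pow_two, h]
  refine (congrArg (algebraMap (LaurentPolynomial ℂ) (HyperRing n a)) hp).trans ?_
  rw [map_sum]
  refine Finset.sum_congr rfl fun j _ => ?_
  exact map_smul (IsScalarTower.toAlgHom ℂ (LaurentPolynomial ℂ) (HyperRing n a)) _ _

lemma u_du : (2 * uElt n a) • KaehlerDifferential.D ℂ (HyperRing n a) (uElt n a) =
    (∑ j ∈ Finset.range (n + 1), a j • ((j : HyperRing n a) * tpow n a ((j : ℤ) - 1))) •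
      KaehlerDifferential.D ℂ (HyperRing n a) (tpow n a 1) := by
  have h := congrArg (KaehlerDifferential.D ℂ (HyperRing n a)) (u_sq n a)
  rw [Derivation.leibniz, ← add_smul, ← two_mul, map_sum] at h
  rw [h, Finset.sum_smul]
  refine Finset.sum_congr rfl fun j _ => ?_
  rw [Derivation.map_smul, D_tpow, smul_assoc]
  simp

lemma key (m : ℤ) : ∑ j ∈ Finset.range (n + 1),
    (((3 * (j : ℤ) - 2 * m + 2 : ℤ) : ℂ) * a j) •
      fdg n a (tpow n a (-(m - j)) * uElt n a) (tpow n a 1) = 0 := by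
  have h1 : (∑ j ∈ Finset.range (n + 1), (((3 * (j : ℤ) - 2 * m + 2 : ℤ) : ℂ) * a j) •
      (tpow n a (-(m - j)) * uElt n a)) • KaehlerDifferential.D ℂ (HyperRing n a) (tpow n a 1) =
      KaehlerDifferential.D ℂ (HyperRing n a)
        (2 * (tpow n a (1 - m) * (uElt n a * (uElt n a * uElt n a)))) := by
    have e2 : KaehlerDifferential.D ℂ (HyperRing n a)
        (2 * (tpow n a (1 - m) * (uElt n a * (uElt n a * uElt n a)))) =
        (3 * tpow n a (1 - m) * uElt n a) • ((2 * uElt n a) • KaehlerDifferential.D ℂ (HyperRing n a) (uElt n a))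
        + (2 * (uElt n a * (uElt n a * uElt n a))) • KaehlerDifferential.D ℂ (HyperRing n a) (tpow n a (1 - m)) := by
      rw [two_mul, map_add]
      simp only [Derivation.leibniz]
      module
    rw [e2, u_du, D_tpow n a (1 - m), smul_smul, smul_smul, ← add_smul, u_sq]
    congr 1
    simp only [Finset.mul_sum, Finset.sum_mul]
    rw [← Finset.sum_add_distrib]
    refine Finset.sum_congr rfl fun j _ => ?_
    have e3 : tpow n a (-(m - j)) = tpow n a (1 - m) * tpow n a ((j : ℤ) - 1) := by
      rw [tpow_mul]; congr 1; congr 1; ring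
    have e4 : tpow n a (1 - m - 1) * tpow n a (j : ℤ) = tpow n a (1 - m) * tpow n a ((j : ℤ) - 1) := by
      rw [tpow_mul, tpow_mul, show 1 - m - 1 + (j : ℤ) = 1 - m + ((j : ℤ) - 1) by ring]
    rw [e3]
    simp only [Algebra.smul_def, map_mul, map_intCast]
    push_cast
    linear_combination (-(2 * (1 - (m : HyperRing n a)) * algebraMap ℂ (HyperRing n a) (a j) * uElt n a)) * e4
  have h2 : cl n a ((∑ j ∈ Finset.range (n + 1), (((3 * (j : ℤ) - 2 * m + 2 : ℤ) : ℂ) * a j) •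
      (tpow n a (-(m - j)) * uElt n a)) • KaehlerDifferential.D ℂ (HyperRing n a) (tpow n a 1)) = 0 := by
    rw [h1]
    exact (Submodule.Quotient.mk_eq_zero _).2 ⟨_, rfl⟩
  rw [← h2, Finset.sum_smul]
  simp only [fdg, cl, ← Submodule.mkQ_apply, map_sum]
  refine Finset.sum_congr rfl fun j _ => ?_
  rw [smul_assoc]
  exact (map_smul (dR n a).mkQ _ _).symm

/-- For every integer `r ≥ 1`, `\overline{t⁻ʳ u dt} = ∑_{k=1}^{n} Q_{r,−k}·ω_k` in `Ω¹_R/dR`,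
where the scalars `Q_{m,i}` (for `−n ≤ i ≤ −1`) are determined by the initial conditions
`Q_{m,i} = δ_{m,−i}` for `1 ≤ m ≤ n` and the recursion
`−2(m−1)·a₀·Q_{m,i} = −∑_{j=1}^{n} (3j−2m+2)·a_j·Q_{m−j,i}` for `m ≥ n+1`. -/
theorem statement7 (hn : 1 ≤ n) (han : a n = 1) (ha0 : a 0 ≠ 0)
    (hsep : (pPoly n a).Separable)
    (Q : ℤ → ℤ → ℂ)
    (hQinit : ∀ m i : ℤ, -(n : ℤ) ≤ i → i ≤ -1 → 1 ≤ m → m ≤ (n : ℤ) →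
      Q m i = if m = -i then 1 else 0)
    (hQrec : ∀ m i : ℤ, -(n : ℤ) ≤ i → i ≤ -1 → (n : ℤ) + 1 ≤ m →
      ((-2 * (m - 1) : ℤ) : ℂ) * a 0 * Q m i =
        -∑ j ∈ Finset.Icc 1 n,
          ((3 * (j : ℤ) - 2 * m + 2 : ℤ) : ℂ) * a j * Q (m - j) i) :
    ∀ r : ℤ, 1 ≤ r →
      fdg n a (tpow n a (-r) * uElt n a) (tpow n a 1) =
        ∑ k ∈ Finset.Icc 1 n, Q r (-(k : ℤ)) • ωk n a k := by
  intro r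
  have main : ∀ N : ℕ, ∀ r : ℤ, 1 ≤ r → r ≤ N →
      fdg n a (tpow n a (-r) * uElt n a) (tpow n a 1) =
        ∑ k ∈ Finset.Icc 1 n, Q r (-(k : ℤ)) • ωk n a k := by
    intro N
    induction N with
    | zero => intro r h1 h2; exfalso; simp at h2; omega
    | succ N ih =>
      intro r h1 h2
      by_cases hr : r ≤ n
      · obtain ⟨r, rfl⟩ := Int.eq_ofNat_of_zero_le (by omega : 0 ≤ r)
        rw [Finset.sum_eq_single r]
        · rw [hQinit _ _ (by omega) (by omega) h1 hr, if_pos (by ring), one_smul]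
        · intro b hb hbr
          rw [Finset.mem_Icc] at hb
          rw [hQinit _ _ (by omega) (by omega) h1 hr, if_neg (by omega), zero_smul]
        · intro hb
          rw [Finset.mem_Icc] at hb
          omega
      · have hk := key n a r
        have hc : ((-2 * (r - 1) : ℤ) : ℂ) * a 0 ≠ 0 :=
          mul_ne_zero (Int.cast_ne_zero.2 (by omega)) ha0
        have hset : Finset.range (n + 1) = insert 0 (Finset.Icc 1 n) := by
          ext x; simp; omega
        rw [hset, Finset.sum_insert (by simp)] at hk
        have hj : ∀ j ∈ Finset.Icc 1 n,
            (((3 * (j : ℤ) - 2 * r + 2 : ℤ) : ℂ) * a j) •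
              fdg n a (tpow n a (-(r - j)) * uElt n a) (tpow n a 1) =
            ∑ k ∈ Finset.Icc 1 n, (((3 * (j : ℤ) - 2 * r + 2 : ℤ) : ℂ) * a j * Q (r - j) (-(k : ℤ))) •
              ωk n a k := by
          intro j hj
          rw [Finset.mem_Icc] at hj
          rw [ih (r - j) (by omega) (by push_cast at h2; omega), Finset.smul_sum]
          simp only [smul_smul]
        rw [Finset.sum_congr rfl hj, Finset.sum_comm] at hk
        simp only [← Finset.sum_smul] at hk
        have hs : ∀ k ∈ Finset.Icc 1 n, (∑ j ∈ Finset.Icc 1 n,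
            ((3 * (j : ℤ) - 2 * r + 2 : ℤ) : ℂ) * a j * Q (r - j) (-(k : ℤ))) • ωk n a k =
            -((((-2 * (r - 1) : ℤ) : ℂ) * a 0) • (Q r (-(k : ℤ)) • ωk n a k)) := by
          intro k hk
          rw [Finset.mem_Icc] at hk
          rw [smul_smul, hQrec r (-(k : ℤ)) (by omega) (by omega) (by omega), neg_smul, neg_neg]
        rw [Finset.sum_congr rfl hs, Finset.sum_neg_distrib, ← Finset.smul_sum, ← sub_eq_add_neg,
          sub_eq_zero] at hk
        have e1 : (3 * ((0 : ℕ) : ℤ) - 2 * r + 2 : ℤ) = -2 * (r - 1) := by push_cast; ring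
        have e2 : -(r - ((0 : ℕ) : ℤ)) = -r := by simp
        rw [e1, e2] at hk
        exact smul_right_injective _ hc hk
  intro h1
  exact main r.toNat r h1 (by omega)
end
end

section
/- The Lie algebra ĝ = (𝔤 ⊗_ℂ R) ⊕ Ω¹_R/dR with Kassel's bracket is a universal central extension of the current algebra 𝔤 ⊗_ℂ R: the projection π: ĝ → 𝔤 ⊗ R, x⊗f + ω ↦ x⊗f, is a surjective Lie algebra homomorphism whose kernel Ω¹_R/dR is contained in the center of ĝ, and for every Lie algebra E over ℂ together with a surjective Lie algebra homomorphism τ: E → 𝔤 ⊗ R whose kernel is contained in the center of E, there exists a unique Lie algebra homomorphism φ: ĝ → E with τ ∘ φ = π. -/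
open TensorProduct
open Polynomial LaurentPolynomial

noncomputable section

variable (n : ℕ) (a : ℕ → ℂ)

variable (𝔤 : Type) [LieRing 𝔤] [LieAlgebra ℂ 𝔤]

/-- The current algebra `𝔤 ⊗ R` (with the tensor factors written as `R ⊗ 𝔤`, carrying
the Lie bracket `[x⊗f, y⊗g] = [x,y]⊗fg`). -/
abbrev CurrentAlg : Type := HyperRing n a ⊗[ℂ] 𝔤

/-- The underlying vector space `ĝ = (𝔤 ⊗ R) ⊕ Ω¹_R/dR`. -/
abbrev HatG : Type := CurrentAlg n a 𝔤 × OmegaQ n a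

/-- The projection `π : ĝ → 𝔤 ⊗ R`, `x⊗f + ω ↦ x⊗f`. -/
abbrev projPi : HatG n a 𝔤 →ₗ[ℂ] CurrentAlg n a 𝔤 :=
  LinearMap.fst ℂ (CurrentAlg n a 𝔤) (OmegaQ n a)

namespace KasselAux

set_option linter.unusedSectionVars false
set_option linter.unusedSimpArgs false

section lie
variable {G : Type} [LieRing G] [LieAlgebra ℂ G] [FiniteDimensional ℂ G] [LieAlgebra.IsSimple ℂ G]

lemma kappa_inv (x y z : G) : killingForm ℂ G ⁅x, y⁆ z = - killingForm ℂ G y ⁅x, z⁆ :=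
  LieModule.traceForm_apply_lie_apply' ℂ G G x y z

lemma kappa_nd : (killingForm ℂ G).Nondegenerate := 
  LieAlgebra.IsKilling.killingForm_nondegenerate ℂ G

lemma casimir (G : Type) [LieRing G] [LieAlgebra ℂ G] [FiniteDimensional ℂ G]
    [LieAlgebra.IsSimple ℂ G] : ∃ (k : ℕ) (e d : Fin k → G), (∀ x : G, ∑ i, ⁅e i, ⁅d i, x⁆⁆ = x) ∧
    ∀ (M : Type) [AddCommGroup M] [Module ℂ M] (b : G →ₗ[ℂ] G →ₗ[ℂ] M) (x : G),
      ∑ i, b ⁅x, e i⁆ (d i) + ∑ i, b (e i) ⁅x, d i⁆ = 0 := by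
  let e := Module.finBasis ℂ G
  have hs : LinearMap.BilinForm.IsSymm (killingForm ℂ G) := ⟨fun x y => LieModule.traceForm_comm ℂ G G x y⟩
  have hsy : ∀ x y, killingForm ℂ G x y = killingForm ℂ G y x := 
    fun x y => LieModule.traceForm_comm ℂ G G x y
  let d := LinearMap.BilinForm.dualBasis (killingForm ℂ G) kappa_nd e
  have hd : ∀ x : G, x = ∑ i, killingForm ℂ G x (e i) • d i := by
    intro x
    conv_lhs => rw [← d.sum_repr x]
    simp only [d, LinearMap.BilinForm.dualBasis_repr_apply]
  have hrep : ∀ x i, e.repr x i = killingForm ℂ G x (d i) := by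
    intro x i
    conv_rhs => rw [← e.sum_repr x]
    have hk : ∀ j, killingForm ℂ G (e j) (d i) = if j = i then 1 else 0 := fun j =>
      LinearMap.BilinForm.apply_dualBasis_right _ hs e j i
    rw [map_sum, LinearMap.sum_apply]
    simp only [map_smul, LinearMap.smul_apply, hk]
    simp
  have he : ∀ x : G, x = ∑ i, killingForm ℂ G x (d i) • e i := by
    intro x
    conv_lhs => rw [← e.sum_repr x]
    simp only [hrep]
  refine ⟨_, e, d, ?_, ?_⟩
  · intro x
    have h0 : ∀ y, killingForm ℂ G (∑ i, ⁅e i, ⁅d i, x⁆⁆ - x) y = 0 := by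
      intro y
      rw [map_sub, LinearMap.sub_apply, sub_eq_zero, hsy x y, map_sum, LinearMap.sum_apply,
        LieModule.traceForm_apply_apply ℂ G G y x,
        LinearMap.trace_eq_matrix_trace ℂ d, Matrix.trace]
      refine Finset.sum_congr rfl fun i _ => ?_
      have : d.repr ((LieModule.toEnd ℂ G G y ∘ₗ LieModule.toEnd ℂ G G x) (d i)) i =
        killingForm ℂ G ⁅y, ⁅x, d i⁆⁆ (e i) := LinearMap.BilinForm.dualBasis_repr_apply ..
      rw [Matrix.diag_apply, LinearMap.toMatrix_apply, this, kappa_inv (e i), kappa_inv y,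
        ← lie_skew (e i) y, ← lie_skew (d i) x]
      simp only [map_neg, LinearMap.neg_apply, neg_neg]
    have := kappa_nd.1 _ h0
    exact sub_eq_zero.mp this
  · intro M _ _ b x
    have h1 : ∀ i, b ⁅x, e i⁆ (d i) = ∑ j, killingForm ℂ G ⁅x, e i⁆ (d j) • b (e j) (d i) := by
      intro i
      conv_lhs => rw [he ⁅x, e i⁆]
      simp
    have h2 : ∀ i, b (e i) ⁅x, d i⁆ = ∑ j, killingForm ℂ G ⁅x, d i⁆ (e j) • b (e i) (d j) := by
      intro i
      conv_lhs => rw [hd ⁅x, d i⁆]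
      simp
    simp only [h1, h2]
    rw [Finset.sum_comm, ← Finset.sum_add_distrib]
    refine Finset.sum_eq_zero fun i _ => ?_
    rw [← Finset.sum_add_distrib]
    refine Finset.sum_eq_zero fun j _ => ?_
    rw [kappa_inv x (d i), hsy (d i)]
    simp

lemma schur0 (b : G →ₗ[ℂ] G →ₗ[ℂ] ℂ) (hb : ∀ x y z : G, b ⁅x, y⁆ z + b y ⁅x, z⁆ = 0) :
    ∃ μ : ℂ, ∀ x y, b x y = μ * killingForm ℂ G x y := by
  have : Nontrivial G := by
    by_contra h
    rw [not_nontrivial_iff_subsingleton] at h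
    exact LieAlgebra.IsSimple.non_abelian ℂ (L := G) ⟨fun x y => Subsingleton.elim _ _⟩
  let κ := LinearMap.BilinForm.toDual (killingForm ℂ G) kappa_nd
  let T : Module.End ℂ G := κ.symm.toLinearMap ∘ₗ b
  have hT : ∀ x y, killingForm ℂ G (T x) y = b x y := by
    intro x y
    exact LinearMap.BilinForm.apply_toDual_symm_apply (hB := kappa_nd) (b x) y
  obtain ⟨μ, hμ⟩ := Module.End.exists_eigenvalue T
  obtain ⟨v, hv⟩ := hμ.exists_hasEigenvector
  let I : LieIdeal ℂ G := 
    { LinearMap.ker (b - μ • killingForm ℂ G) with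
      lie_mem := by
        intro x m hm
        have hm' : (b - μ • killingForm ℂ G) m = 0 := hm
        change (b - μ • killingForm ℂ G) ⁅x, m⁆ = 0
        ext z
        have h1 := hb x m z
        have h2 := congrArg (fun f => f ⁅x, z⁆) hm'
        simp only [LinearMap.sub_apply, LinearMap.smul_apply, kappa_inv x m z, smul_eq_mul,
          LinearMap.zero_apply] at h2 ⊢
        linear_combination h1 - h2 }
  have hI : ∀ m, m ∈ I ↔ (b - μ • killingForm ℂ G) m = 0 := fun m => Iff.rfl
  have hvI : v ∈ I := by
    rw [hI]
    ext z
    simp [← hT, hv.apply_eq_smul]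
  rcases LieAlgebra.IsSimple.eq_bot_or_eq_top I with h | h
  · rw [h] at hvI
    exact absurd ((LieSubmodule.mem_bot _).1 hvI) hv.2
  · refine ⟨μ, fun x y => ?_⟩
    have hx : x ∈ I := by rw [h]; trivial
    have := congrArg (fun f => f y) ((hI x).1 hx)
    simp only [LinearMap.sub_apply, LinearMap.smul_apply, smul_eq_mul,
          LinearMap.zero_apply] at this
    linear_combination this

lemma exists_one (G : Type) [LieRing G] [LieAlgebra ℂ G] [FiniteDimensional ℂ G]
    [LieAlgebra.IsSimple ℂ G] : ∃ x y z : G, killingForm ℂ G x ⁅y, z⁆ = 1 := by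
  by_contra! hcon
  apply LieAlgebra.IsSimple.non_abelian ℂ (L := G)
  refine ⟨fun y z => ?_⟩
  refine kappa_nd.2 _ fun x => ?_
  by_contra h
  refine hcon ((killingForm ℂ G x ⁅y, z⁆)⁻¹ • x) y z ?_
  simp [h]

lemma schur {E : Type} [AddCommGroup E] [Module ℂ E] (b : G →ₗ[ℂ] G →ₗ[ℂ] E)
    (hb : ∀ x y z : G, b ⁅x, y⁆ z + b y ⁅x, z⁆ = 0) (x₀ y₀ : G) (h1 : killingForm ℂ G x₀ y₀ = 1)
    (x y : G) : b x y = killingForm ℂ G x y • b x₀ y₀ := by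
  rw [← sub_eq_zero, ← Module.forall_dual_apply_eq_zero_iff ℂ]
  intro f
  obtain ⟨μ, hμ⟩ := schur0 (b.compr₂ f) (by
    intro x y z
    simp [← map_add, hb])
  simp only [LinearMap.compr₂_apply] at hμ
  simp [hμ, h1]
  ring

end lie

section kahler
variable (R E : Type) [CommRing R] [Algebra ℂ R] [AddCommGroup E] [Module ℂ E]

/-- `Hom_ℂ(R, E)` with its `R`-module structure through the source. -/
def Coind : Type := R →ₗ[ℂ] E

instance : AddCommGroup (Coind R E) := inferInstanceAs (AddCommGroup (R →ₗ[ℂ] E))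
instance : Module ℂ (Coind R E) := inferInstanceAs (Module ℂ (R →ₗ[ℂ] E))

/-- Evaluation at `r`. -/
def Coind.ev (r : R) : Coind R E →ₗ[ℂ] E := LinearMap.applyₗ (R := ℂ) (M := R) (M₂ := E) r

variable {R E} in
lemma Coind.ext' {p q : Coind R E} (h : ∀ r, Coind.ev R E r p = Coind.ev R E r q) : p = q :=
  LinearMap.ext (f := (p : R →ₗ[ℂ] E)) (g := q) h

instance : SMul R (Coind R E) := ⟨fun r p => LinearMap.comp (p : R →ₗ[ℂ] E) (LinearMap.mulLeft ℂ r)⟩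

lemma Coind.ev_smul (r s : R) (p : Coind R E) :
    Coind.ev R E s (r • p) = Coind.ev R E (r * s) p := rfl

lemma Coind.ev_add (r s : R) (p : Coind R E) :
    Coind.ev R E (r + s) p = Coind.ev R E r p + Coind.ev R E s p :=
  LinearMap.map_add (p : R →ₗ[ℂ] E) r s

lemma Coind.ev_zero (p : Coind R E) : Coind.ev R E 0 p = 0 :=
  LinearMap.map_zero (p : R →ₗ[ℂ] E)

lemma Coind.ev_smulC (z : ℂ) (r : R) (p : Coind R E) :
    Coind.ev R E (z • r) p = z • Coind.ev R E r p :=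
  LinearMap.map_smul (p : R →ₗ[ℂ] E) z r

instance : Module R (Coind R E) where
  one_smul p := Coind.ext' fun r => by simp [Coind.ev_smul]
  mul_smul r s p := Coind.ext' fun t => by simp [Coind.ev_smul]; congr 1; ring_nf
  smul_zero r := Coind.ext' fun t => by simp [Coind.ev_smul]
  smul_add r p q := Coind.ext' fun t => by simp [Coind.ev_smul]
  add_smul r s p := Coind.ext' fun t => by simp [Coind.ev_smul, add_mul, Coind.ev_add]
  zero_smul p := Coind.ext' fun t => by simp [Coind.ev_smul, Coind.ev_zero]

instance : IsScalarTower ℂ R (Coind R E) :=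
  ⟨fun z r p => Coind.ext' fun t => by simp [Coind.ev_smul, Coind.ev_smulC]⟩

variable {R E}

lemma exists_chat (c : R →ₗ[ℂ] R →ₗ[ℂ] E) (ha : ∀ f g, c f g = - c g f)
    (hc : ∀ f g k, c f (g * k) = c (f * g) k + c (f * k) g) :
    ∃ C : (Ω[R⁄ℂ] ⧸ LinearMap.range (KaehlerDifferential.D ℂ R).toLinearMap) →ₗ[ℂ] E,
      ∀ f g : R, C (Submodule.Quotient.mk (f • KaehlerDifferential.D ℂ R g)) = c f g := by
  let L : R →ₗ[ℂ] Coind R E := c.flip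
  have hL : ∀ f g, Coind.ev R E f (L g) = c f g := fun f g => rfl
  let D : Derivation ℂ R (Coind R E) := Derivation.mk' L (by
    intro g k
    refine Coind.ext' fun f => ?_
    rw [map_add, Coind.ev_smul, Coind.ev_smul, hL, hL, hL, hc, mul_comm f g, mul_comm f k])
  have hD : ∀ f g, Coind.ev R E f (D g) = c f g := fun f g => rfl
  let C0 : Ω[R⁄ℂ] →ₗ[ℂ] E := Coind.ev R E 1 ∘ₗ (D.liftKaehlerDifferential).restrictScalars ℂ
  have hC0 : ∀ f g, C0 (f • KaehlerDifferential.D ℂ R g) = c f g := by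
    intro f g
    simp [C0, Coind.ev_smul, hD]
  have h1 : ∀ g, c 1 g = 0 := by
    intro g
    have h := hc g 1 1
    simp only [mul_one] at h
    rw [ha, left_eq_add.1 h, neg_zero]
  refine ⟨Submodule.liftQ _ C0 ?_, fun f g => hC0 f g⟩
  rintro _ ⟨g, rfl⟩
  have := hC0 1 g
  rw [one_smul, h1] at this
  exact this

end kahler

section main
variable {G : Type} [LieRing G] [LieAlgebra ℂ G] [FiniteDimensional ℂ G] [LieAlgebra.IsSimple ℂ G]
variable {R E : Type} [CommRing R] [Algebra ℂ R] [AddCommGroup E] [Module ℂ E]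

lemma key (b : R ⊗[ℂ] G →ₗ[ℂ] R ⊗[ℂ] G →ₗ[ℂ] E) (ha : ∀ u v, b u v = - b v u)
    (hb : ∀ (f g k : R) (x y z : G), b (f ⊗ₜ x) ((g * k) ⊗ₜ ⁅y, z⁆) =
      b ((f * g) ⊗ₜ ⁅x, y⁆) (k ⊗ₜ z) + b (g ⊗ₜ y) ((f * k) ⊗ₜ ⁅x, z⁆)) :
    ∃ (h : R ⊗[ℂ] G →ₗ[ℂ] E)
      (C : (Ω[R⁄ℂ] ⧸ LinearMap.range (KaehlerDifferential.D ℂ R).toLinearMap) →ₗ[ℂ] E),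
      ∀ (f g : R) (x y : G), b (f ⊗ₜ x) (g ⊗ₜ y) = h ((f * g) ⊗ₜ ⁅x, y⁆) +
        killingForm ℂ G x y • C (Submodule.Quotient.mk (f • KaehlerDifferential.D ℂ R g)) := by
  obtain ⟨k, e, d, h1, h2⟩ := casimir G
  let h : R ⊗[ℂ] G →ₗ[ℂ] E :=
    ∑ i, b ((1 : R) ⊗ₜ e i) ∘ₗ (LinearMap.lTensor R (LieAlgebra.ad ℂ G (d i)))
  have hh : ∀ f x, h (f ⊗ₜ x) = ∑ i, b ((1 : R) ⊗ₜ e i) (f ⊗ₜ ⁅d i, x⁆) := by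
    intro f x
    simp [h]
  -- step 1
  have s1 : ∀ (f : R) (x y : G), b ((1 : R) ⊗ₜ x) (f ⊗ₜ y) = h (f ⊗ₜ ⁅x, y⁆) := by
    intro f x y
    rw [hh]
    conv_lhs => rw [← h1 y]
    rw [TensorProduct.tmul_sum, map_sum]
    have h3 := h2 E (LinearMap.mk₂ ℂ (fun p q : G => b ((1 : R) ⊗ₜ p) (f ⊗ₜ ⁅q, y⁆))
      (by intros; simp [TensorProduct.tmul_add]) (by intros; simp)
      (by intros; simp [TensorProduct.tmul_add]) (by intros; simp)) x
    simp only [LinearMap.mk₂_apply] at h3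
    rw [← sub_eq_zero, ← Finset.sum_sub_distrib, ← h3, ← Finset.sum_add_distrib]
    refine Finset.sum_congr rfl fun i _ => ?_
    have h4 := hb 1 1 f x (e i) ⁅d i, y⁆
    simp only [one_mul] at h4
    rw [h4, leibniz_lie x (d i) y, TensorProduct.tmul_add, map_add]
    abel
  -- the modified cocycle
  let b' : R → R → G →ₗ[ℂ] G →ₗ[ℂ] E := fun f g =>
    LinearMap.mk₂ ℂ (fun x y : G => b (f ⊗ₜ x) (g ⊗ₜ y) - h ((f * g) ⊗ₜ ⁅x, y⁆))
      (by intros; simp [TensorProduct.tmul_add]; abel) (by intros; simp [smul_sub])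
      (by intros; simp [TensorProduct.tmul_add]; abel) (by intros; simp [smul_sub])
  have hb' : ∀ f g x y, b' f g x y = b (f ⊗ₜ x) (g ⊗ₜ y) - h ((f * g) ⊗ₜ ⁅x, y⁆) :=
    fun _ _ _ _ => rfl
  have inv : ∀ (f g : R) (x y z : G), b' f g ⁅x, y⁆ z + b' f g y ⁅x, z⁆ = 0 := by
    intro f g x y z
    have h4 := hb 1 f g x y z
    simp only [one_mul] at h4
    rw [s1] at h4
    rw [hb', hb', sub_add_sub_comm, ← h4, ← map_add, ← TensorProduct.tmul_add, ← leibniz_lie,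
      sub_self]
  obtain ⟨x₀, p, q, h0⟩ := exists_one G
  have hS : ∀ f g x y, b' f g x y = killingForm ℂ G x y • b' f g x₀ ⁅p, q⁆ := fun f g x y =>
    schur (b' f g) (inv f g) x₀ _ h0 x y
  let c : R →ₗ[ℂ] R →ₗ[ℂ] E := LinearMap.mk₂ ℂ (fun f g => b' f g x₀ ⁅p, q⁆)
    (by intros; simp only [hb', TensorProduct.add_tmul, add_mul, map_add, LinearMap.add_apply]; abel)
    (by intros; simp only [hb', ← TensorProduct.smul_tmul', smul_mul_assoc, map_smul,
          LinearMap.smul_apply, smul_sub])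
    (by intros; simp only [hb', TensorProduct.add_tmul, mul_add, map_add, LinearMap.add_apply]; abel)
    (by intros; simp only [hb', ← TensorProduct.smul_tmul', mul_smul_comm, map_smul,
          LinearMap.smul_apply, smul_sub])
  have hc : ∀ f g x y, b (f ⊗ₜ x) (g ⊗ₜ y) - h ((f * g) ⊗ₜ ⁅x, y⁆) =
    killingForm ℂ G x y • c f g := fun f g x y => hS f g x y
  have hsy : ∀ x y, killingForm ℂ G x y = killingForm ℂ G y x :=
    fun x y => LieModule.traceForm_comm ℂ G G x y
  have ca : ∀ f g, c f g = - c g f := by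
    intro f g
    have e1 := hc f g x₀ ⁅p, q⁆
    have e2 := hc g f ⁅p, q⁆ x₀
    rw [h0, one_smul] at e1
    rw [hsy, h0, one_smul] at e2
    rw [← e1, ← e2, ha, mul_comm g f, ← lie_skew x₀, TensorProduct.tmul_neg, map_neg]
    abel
  have cc : ∀ f g k, c f (g * k) = c (f * g) k + c (f * k) g := by
    intro f g k
    have e1 := hc f (g * k) x₀ ⁅p, q⁆
    have e2 := hc (f * g) k ⁅x₀, p⁆ q
    have e3 := hc g (f * k) p ⁅x₀, q⁆
    have k2 : killingForm ℂ G ⁅x₀, p⁆ q = 1 := by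
      rw [← lie_skew, map_neg, LinearMap.neg_apply, kappa_inv, neg_neg, h0]
    have k3 : killingForm ℂ G p ⁅x₀, q⁆ = -1 := by
      rw [← neg_eq_iff_eq_neg, ← kappa_inv, k2]
    rw [h0, one_smul] at e1
    rw [k2, one_smul] at e2
    rw [k3, neg_smul, one_smul, ← ca] at e3
    rw [← e1, ← e2, ← e3, hb, leibniz_lie x₀ p q, TensorProduct.tmul_add, map_add,
      mul_left_comm g f k, mul_assoc]
    abel
  obtain ⟨C, hC⟩ := exists_chat c ca cc
  refine ⟨h, C, fun f g x y => ?_⟩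
  rw [hC, ← hc]
  abel


abbrev Om (R : Type) [CommRing R] [Algebra ℂ R] : Type :=
  Ω[R⁄ℂ] ⧸ LinearMap.range (KaehlerDifferential.D ℂ R).toLinearMap

lemma hat_ind (P : ((R ⊗[ℂ] G) × Om R) →ₗ[ℂ] E)
    (h : ∀ (f : R) (x : G) (w : Om R), P (f ⊗ₜ x, w) = 0) (u : (R ⊗[ℂ] G) × Om R) : P u = 0 := by
  obtain ⟨t, w⟩ := u
  induction t using TensorProduct.induction_on generalizing w with
  | zero => simpa using h 0 0 w
  | tmul f x => exact h f x w
  | add t₁ t₂ h₁ h₂ =>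
    have : ((t₁ + t₂, w) : (R ⊗[ℂ] G) × Om R) = (t₁, w) + (t₂, 0) := by simp
    rw [this, map_add, h₁, h₂, add_zero]

lemma hat_ind₂ (P : ((R ⊗[ℂ] G) × Om R) →ₗ[ℂ] ((R ⊗[ℂ] G) × Om R) →ₗ[ℂ] E)
    (h : ∀ (f g : R) (x y : G) (w w' : Om R), P (f ⊗ₜ x, w) (g ⊗ₜ y, w') = 0)
    (u v : (R ⊗[ℂ] G) × Om R) : P u v = 0 := by
  have : P u = 0 := hat_ind P (fun f x w => LinearMap.ext fun v =>
    hat_ind (P (f ⊗ₜ x, w)) (fun g y w' => h f g x y w w') v) u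
  rw [this, LinearMap.zero_apply]

lemma perf (B : ((R ⊗[ℂ] G) × Om R) →ₗ[ℂ] ((R ⊗[ℂ] G) × Om R) →ₗ[ℂ] ((R ⊗[ℂ] G) × Om R))
    (hK : ∀ (f g : R) (x y : G) (w w' : Om R), B (f ⊗ₜ x, w) (g ⊗ₜ y, w') =
      ((f * g) ⊗ₜ ⁅x, y⁆, killingForm ℂ G x y •
        (Submodule.Quotient.mk (f • KaehlerDifferential.D ℂ R g) : Om R)))
    (P : ((R ⊗[ℂ] G) × Om R) →ₗ[ℂ] E) (h : ∀ u v, P (B u v) = 0)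
    (u : (R ⊗[ℂ] G) × Om R) : P u = 0 := by
  have h1 : ∀ (f : R) (x : G), P (f ⊗ₜ x, 0) = 0 := by
    intro f x
    obtain ⟨k, e, d, h1, -⟩ := casimir G
    have hd : (Submodule.Quotient.mk ((1 : R) • KaehlerDifferential.D ℂ R f) : Om R) = 0 := by
      rw [one_smul, Submodule.Quotient.mk_eq_zero]
      exact ⟨f, rfl⟩
    have : ((f ⊗ₜ x, 0) : (R ⊗[ℂ] G) × Om R) =
        ∑ i, B ((1 : R) ⊗ₜ e i, 0) (f ⊗ₜ ⁅d i, x⁆, 0) := by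
      simp only [hK, hd, smul_zero, one_mul]
      conv_lhs => rw [← h1 x, TensorProduct.tmul_sum]
      ext
      · simp [Prod.fst_sum]
      · simp [Prod.snd_sum]
    rw [this, map_sum]
    exact Finset.sum_eq_zero fun i _ => h _ _
  obtain ⟨x₀, p, q, h0⟩ := exists_one G
  have h2 : ∀ f g : R, P (0, Submodule.Quotient.mk (f • KaehlerDifferential.D ℂ R g)) = 0 := by
    intro f g
    have e1 := h (f ⊗ₜ x₀, 0) (g ⊗ₜ ⁅p, q⁆, 0)
    rw [hK, h0, one_smul] at e1
    have e2 : (((f * g) ⊗ₜ ⁅x₀, ⁅p, q⁆⁆, Submodule.Quotient.mk (f • KaehlerDifferential.D ℂ R g)) :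
      (R ⊗[ℂ] G) × Om R) = ((f * g) ⊗ₜ ⁅x₀, ⁅p, q⁆⁆, 0) +
        (0, Submodule.Quotient.mk (f • KaehlerDifferential.D ℂ R g)) := by simp
    rwa [e2, map_add, h1, zero_add] at e1
  have h3 : ∀ (m : Ω[R⁄ℂ]) (f : R), P (0, Submodule.Quotient.mk (f • m)) = 0 := by
    intro m
    have hm : m ∈ Submodule.span R (Set.range (KaehlerDifferential.D ℂ R)) := by
      rw [KaehlerDifferential.span_range_derivation]; trivial
    induction hm using Submodule.span_induction with
    | mem m hm => obtain ⟨g, rfl⟩ := hm; exact fun f => h2 f g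
    | zero => intro f; rw [smul_zero, Submodule.Quotient.mk_zero]; exact map_zero P
    | add m₁ m₂ _ _ i₁ i₂ =>
      intro f
      have e2 : ((0, Submodule.Quotient.mk (f • (m₁ + m₂))) : (R ⊗[ℂ] G) × Om R) =
        (0, Submodule.Quotient.mk (f • m₁)) + (0, Submodule.Quotient.mk (f • m₂)) := by
        simp [smul_add]
      rw [e2, map_add, i₁, i₂, add_zero]
    | smul r m _ i => intro f; rw [smul_smul]; exact i _
  refine hat_ind P (fun f x w => ?_) u
  obtain ⟨m, rfl⟩ := Submodule.Quotient.mk_surjective _ w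
  have e2 : ((f ⊗ₜ x, Submodule.Quotient.mk m) : (R ⊗[ℂ] G) × Om R) =
        (f ⊗ₜ x, 0) + (0, Submodule.Quotient.mk ((1 : R) • m)) := by simp
  rw [e2, map_add, h1, h3, add_zero]

theorem universal
    (B : ((R ⊗[ℂ] G) × Om R) →ₗ[ℂ] ((R ⊗[ℂ] G) × Om R) →ₗ[ℂ] ((R ⊗[ℂ] G) × Om R))
    (hK : ∀ (f g : R) (x y : G) (w w' : Om R), B (f ⊗ₜ x, w) (g ⊗ₜ y, w') =
      ((f * g) ⊗ₜ ⁅x, y⁆, killingForm ℂ G x y •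
        (Submodule.Quotient.mk (f • KaehlerDifferential.D ℂ R g) : Om R))) :
    Function.Surjective (LinearMap.fst ℂ (R ⊗[ℂ] G) (Om R)) ∧
    (∀ u v, LinearMap.fst ℂ (R ⊗[ℂ] G) (Om R) (B u v) =
      ⁅LinearMap.fst ℂ (R ⊗[ℂ] G) (Om R) u, LinearMap.fst ℂ (R ⊗[ℂ] G) (Om R) v⁆) ∧
    (∀ v, LinearMap.fst ℂ (R ⊗[ℂ] G) (Om R) v = 0 → ∀ w, B v w = 0) ∧
    (∀ (E : Type) [LieRing E] [LieAlgebra ℂ E] (τ : E →ₗ[ℂ] R ⊗[ℂ] G),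
        Function.Surjective τ →
        (∀ e e' : E, τ ⁅e, e'⁆ = ⁅τ e, τ e'⁆) →
        (∀ e : E, τ e = 0 → ∀ e' : E, ⁅e, e'⁆ = 0) →
        ∃! φ : ((R ⊗[ℂ] G) × Om R) →ₗ[ℂ] E,
          (∀ u v, φ (B u v) = ⁅φ u, φ v⁆) ∧ τ.comp φ = LinearMap.fst ℂ (R ⊗[ℂ] G) (Om R)) := by
  have hπ : ∀ u v : (R ⊗[ℂ] G) × Om R, (B u v).1 = ⁅u.1, v.1⁆ := by
    intro u v
    let P : ((R ⊗[ℂ] G) × Om R) →ₗ[ℂ] ((R ⊗[ℂ] G) × Om R) →ₗ[ℂ] (R ⊗[ℂ] G) :=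
      LinearMap.mk₂ ℂ (fun u v => (B u v).1 - ⁅u.1, v.1⁆)
        (by intros; simp; abel)
        (by
          intros
          simp only [map_smul, LinearMap.smul_apply, Prod.smul_fst, smul_sub]
          rw [← algebraMap_smul R, smul_lie, algebraMap_smul])
        (by intros; simp; abel)
        (by
          intros
          simp only [map_smul, Prod.smul_fst, smul_sub]
          rw [← algebraMap_smul R, lie_smul, algebraMap_smul])
    have : P u v = 0 := hat_ind₂ P (by
      intro f g x y w w'
      simp [P, hK]) u v
    exact sub_eq_zero.1 this
  refine ⟨LinearMap.fst_surjective, hπ, ?_, ?_⟩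
  · rintro ⟨t, w⟩ ht v
    obtain rfl : t = 0 := ht
    refine hat_ind (B (0, w)) (fun g y w' => ?_) v
    have := hK 0 g 0 y w w'
    simp only [TensorProduct.zero_tmul, map_zero, LinearMap.zero_apply, zero_smul, zero_mul] at this
    exact this
  · intro E _ _ τ hτ hlie hcen
    obtain ⟨s, hs⟩ := LinearMap.exists_rightInverse_of_surjective τ (LinearMap.range_eq_top.2 hτ)
    have hs' : ∀ t, τ (s t) = t := fun t => LinearMap.congr_fun hs t
    let b : R ⊗[ℂ] G →ₗ[ℂ] R ⊗[ℂ] G →ₗ[ℂ] E := LinearMap.mk₂ ℂ (fun u v => ⁅s u, s v⁆)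
      (by intros; simp) (by intros; simp) (by intros; simp) (by intros; simp)
    have hbdef : ∀ u v, b u v = ⁅s u, s v⁆ := fun _ _ => rfl
    have hE : ∀ e e' : E, ⁅e, e'⁆ = b (τ e) (τ e') := by
      intro e e'
      have e1 := hcen (e - s (τ e)) (by rw [map_sub, hs', sub_self]) e'
      have e2 := hcen (e' - s (τ e')) (by rw [map_sub, hs', sub_self]) (s (τ e))
      rw [sub_lie, sub_eq_zero] at e1
      rw [← lie_skew, neg_eq_zero, lie_sub, sub_eq_zero] at e2
      rw [e1, e2, hbdef]
    have hjac : ∀ u v w, b u ⁅v, w⁆ = b ⁅u, v⁆ w + b v ⁅u, w⁆ := by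
      intro u v w
      have := leibniz_lie (s u) (s v) (s w)
      rw [hE (s u) ⁅s v, s w⁆, hE ⁅s u, s v⁆ (s w), hE (s v) ⁅s u, s w⁆] at this
      simpa only [hlie, hs'] using this
    obtain ⟨h, C, hC⟩ := key b (fun u v => by rw [hbdef, hbdef, lie_skew]) (by
      intro f g k x y z
      simpa using hjac (f ⊗ₜ x) (g ⊗ₜ y) (k ⊗ₜ z))
    let φ : ((R ⊗[ℂ] G) × Om R) →ₗ[ℂ] E := h.coprod C
    have hφ : ∀ u v, φ (B u v) = b u.1 v.1 := by
      intro u v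
      let P : ((R ⊗[ℂ] G) × Om R) →ₗ[ℂ] ((R ⊗[ℂ] G) × Om R) →ₗ[ℂ] E :=
        B.compr₂ φ - b.compl₁₂ (LinearMap.fst ℂ _ _) (LinearMap.fst ℂ _ _)
      have : P u v = 0 := hat_ind₂ P (by
        intro f g x y w w'
        simp [P, hK, φ, hC]) u v
      exact sub_eq_zero.1 this
    have hτφ : τ.comp φ = LinearMap.fst ℂ (R ⊗[ℂ] G) (Om R) := by
      rw [← sub_eq_zero]
      refine LinearMap.ext fun u => ?_
      refine perf B hK _ (fun u v => ?_) u
      rw [LinearMap.sub_apply, LinearMap.comp_apply, hφ, hbdef, hlie, hs', hs', LinearMap.fst_apply,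
        hπ, sub_self]
    refine ⟨φ, ⟨fun u v => ?_, hτφ⟩, ?_⟩
    · rw [hφ, hE]
      have := LinearMap.congr_fun hτφ
      simp only [LinearMap.comp_apply, LinearMap.fst_apply] at this
      rw [this, this]
    · rintro ψ ⟨h1, h2⟩
      have := LinearMap.congr_fun h2
      simp only [LinearMap.comp_apply, LinearMap.fst_apply] at this
      rw [← sub_eq_zero]
      refine LinearMap.ext fun u => ?_
      refine perf B hK _ (fun u v => ?_) u
      rw [LinearMap.sub_apply, hφ, h1, hE, this, this, sub_self]

end main
end KasselAux

/-- `ĝ = (𝔤 ⊗ R) ⊕ Ω¹_R/dR` with Kassel's bracket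
`[x⊗f + ω, y⊗g + ω′] = [x,y]⊗fg + κ(x,y)·\overline{f dg}` is a universal central
extension of the current algebra `𝔤 ⊗ R`: the projection `π` is a surjective Lie
algebra homomorphism whose kernel `Ω¹_R/dR` is contained in the center of `ĝ`, and for
every Lie algebra `E` over ℂ with a surjective homomorphism `τ : E → 𝔤 ⊗ R` whose kernel
is contained in the center of `E`, there is a unique Lie algebra homomorphism
`φ : ĝ → E` with `τ ∘ φ = π`. -/
theorem statement16 (hn : 1 ≤ n) (han : a n = 1) (ha0 : a 0 ≠ 0)
    (hsep : (pPoly n a).Separable)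
    [FiniteDimensional ℂ 𝔤] [LieAlgebra.IsSimple ℂ 𝔤]
    -- Kassel's bracket on `ĝ`, which makes `ĝ` a Lie algebra over ℂ:
    (B : HatG n a 𝔤 →ₗ[ℂ] HatG n a 𝔤 →ₗ[ℂ] HatG n a 𝔤)
    (hAlt : ∀ v, B v v = 0)
    (hJacobi : ∀ u v w, B u (B v w) = B (B u v) w + B v (B u w))
    (hKassel : ∀ (f g : HyperRing n a) (x y : 𝔤) (ω ω' : OmegaQ n a),
      B (f ⊗ₜ x, ω) (g ⊗ₜ y, ω') =
        ((f * g) ⊗ₜ ⁅x, y⁆, killingForm ℂ 𝔤 x y • fdg n a f g)) :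
    -- `π` is a surjective Lie algebra homomorphism:
    Function.Surjective (projPi n a 𝔤) ∧
      (∀ u v : HatG n a 𝔤, projPi n a 𝔤 (B u v) = ⁅projPi n a 𝔤 u, projPi n a 𝔤 v⁆) ∧
      -- the kernel `Ω¹_R/dR` of `π` is contained in the center of `ĝ`:
      (∀ v : HatG n a 𝔤, projPi n a 𝔤 v = 0 → ∀ w : HatG n a 𝔤, B v w = 0) ∧
      -- universal property:
      (∀ (E : Type) [LieRing E] [LieAlgebra ℂ E] (τ : E →ₗ[ℂ] CurrentAlg n a 𝔤),
        Function.Surjective τ →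
        (∀ e e' : E, τ ⁅e, e'⁆ = ⁅τ e, τ e'⁆) →
        (∀ e : E, τ e = 0 → ∀ e' : E, ⁅e, e'⁆ = 0) →
        ∃! φ : HatG n a 𝔤 →ₗ[ℂ] E,
          (∀ u v : HatG n a 𝔤, φ (B u v) = ⁅φ u, φ v⁆) ∧
            τ.comp φ = projPi n a 𝔤) := by
  exact KasselAux.universal B hKassel
end
end
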